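/- Let n ≥ 2, α ∈ (0, 1/n), and let X = (X_1,…,X_n) be a vector of integrable random variables following an α-concentration-exclusion (α-CE) model, and write S = X_1 + ⋯ + X_n. If ES_β(S) > ES_{nα}(S) for all β ∈ (0, nα), then DQ^ES_{nα}(X) = 1. -/

import Mathlib

open MeasureTheory ProbabilityTheory Filter Set

namespace DQ

variable {Ω : Type*} [MeasurableSpace Ω]

/-- An atomless probability measure: every non-null measurable set has a measurable
subset of strictly smaller positive measure. -/
def Atomless (P : Measure Ω) : Prop :=
  ∀ A : Set Ω, MeasurableSet A → 0 < P A →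
    ∃ B, MeasurableSet B ∧ B ⊆ A ∧ 0 < P B ∧ P B < P A

/-- Value-at-Risk at level `α` (small-`α` convention):
`VaR_α(X) = inf {x | P(X ≤ x) ≥ 1 - α}`. -/
noncomputable def VaR (P : Measure Ω) (α : ℝ) (X : Ω → ℝ) : ℝ :=
  sInf {x : ℝ | 1 - α ≤ (P {ω | X ω ≤ x}).toReal}

/-- Expected Shortfall at level `α`: `ES_α(X) = (1/α) ∫_0^α VaR_β(X) dβ`. -/
noncomputable def ES (P : Measure Ω) (α : ℝ) (X : Ω → ℝ) : ℝ :=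
  (1 / α) * ∫ β in Set.Ioo (0 : ℝ) α, VaR P β X

/-- `α* = inf {β ∈ (0,1) | VaR_β(∑ Xᵢ) ≤ ∑ VaR_α(Xᵢ)}`, with `inf ∅ = 1`. -/
noncomputable def alphaStarVaR (P : Measure Ω) (α : ℝ) {n : ℕ} (X : Fin n → Ω → ℝ) : ℝ :=
  sInf ({β ∈ Set.Ioo (0 : ℝ) 1 |
    VaR P β (fun ω => ∑ i, X i ω) ≤ ∑ i, VaR P α (X i)} ∪ {1})

/-- Diversification quotient based on VaR: `DQ^VaR_α(X) = α*/α`. -/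
noncomputable def DQVaR (P : Measure Ω) (α : ℝ) {n : ℕ} (X : Fin n → Ω → ℝ) : ℝ :=
  alphaStarVaR P α X / α

/-- `α* = inf {β ∈ (0,1) | ES_β(∑ Xᵢ) ≤ ∑ ES_α(Xᵢ)}`, with `inf ∅ = 1`. -/
noncomputable def alphaStarES (P : Measure Ω) (α : ℝ) {n : ℕ} (X : Fin n → Ω → ℝ) : ℝ :=
  sInf ({β ∈ Set.Ioo (0 : ℝ) 1 |
    ES P β (fun ω => ∑ i, X i ω) ≤ ∑ i, ES P α (X i)} ∪ {1})

/-- Diversification quotient based on ES: `DQ^ES_α(X) = α*/α`. -/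
noncomputable def DQES (P : Measure Ω) (α : ℝ) {n : ℕ} (X : Fin n → Ω → ℝ) : ℝ :=
  alphaStarES P α X / α

end DQ

namespace DQ

variable {Ω : Type*} [MeasurableSpace Ω]

/-- `A` is a tail event of `X`: `0 < P(A) < 1` and, off a null set,
`X(ω) ≥ X(ω')` for all `ω ∈ A` and `ω' ∈ Aᶜ`. -/
def TailEvent (P : Measure Ω) (X : Ω → ℝ) (A : Set Ω) : Prop :=
  MeasurableSet A ∧ 0 < P A ∧ P A < 1 ∧
  ∃ N : Set Ω, P N = 0 ∧ ∀ ω ∈ A \ N, ∀ ω' ∈ Aᶜ \ N, X ω' ≤ X ω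

/-- `(X₁,…,Xₙ)` is `α`-concentrated: the components share a common tail event of
probability `α`. -/
def Concentrated (P : Measure Ω) {n : ℕ} (X : Fin n → Ω → ℝ) (α : ℝ) : Prop :=
  ∃ A : Set Ω, P A = ENNReal.ofReal α ∧ ∀ i, TailEvent P (X i) A

end DQ

namespace DQ

variable {Ω : Type*} [MeasurableSpace Ω]

/-- The `α`-concentration-exclusion (`α`-CE) model, for `α ∈ (0, 1/n)`. -/
def CEModel (P : Measure Ω) {n : ℕ} (X : Fin n → Ω → ℝ) (α : ℝ) : Prop :=
  (∀ i, (P {ω | VaR P α (X i) < X i ω}).toReal = α) ∧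
  (∀ i, (n : ℝ) * α ≤ (P {ω | VaR P α (X i) ≤ X i ω}).toReal) ∧
  (∀ i j, i ≠ j →
    P ({ω | VaR P α (X i) < X i ω} ∩ {ω | VaR P α (X j) < X j ω}) = 0) ∧
  Concentrated P X ((n : ℝ) * α)

end DQ

/-!
For a tail event `A` of `X`, every sublevel set `{X ≤ x}` is, up to a null set, contained in `Aᶜ` or
contains it. Hence `β ↦ VaR_β(X)` on `(0, P(A))` under Lebesgue measure has the same distribution as
`X` on `A` under `P`, and so `ES_{P(A)}(X)` is the mean of `X` over `A`. A common tail event of the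
`Xᵢ` is also a tail event of their sum, so linearity of the mean makes `ES_{P(A)}` additive along
`X`. The level `P(A)` is therefore admissible in the definition of `α*`, and it is the least
admissible level exactly when no smaller level `β` satisfies `ES_β(S) ≤ ES_{P(A)}(S)`.
-/

namespace DQ

section Quantile

variable {μ : Measure ℝ} {p : ℝ}

lemma bddBelow_setOf_le_cdf (hp : 0 < p) : BddBelow {x | p ≤ cdf μ x} := by
  obtain ⟨b, hb⟩ := ((tendsto_cdf_atBot μ).eventually_lt_const hp).exists
  exact ⟨b, fun x hx => ((monotone_cdf μ).reflect_lt (hb.trans_le hx)).le⟩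

lemma nonempty_setOf_le_cdf (hp : p < 1) : {x | p ≤ cdf μ x}.Nonempty := by
  obtain ⟨b, hb⟩ := ((tendsto_cdf_atTop μ).eventually_const_lt hp).exists
  exact ⟨b, hb.le⟩

lemma csInf_setOf_le_cdf_le_iff (hp : p ∈ Ioo 0 1) {x : ℝ} :
    sInf {y | p ≤ cdf μ y} ≤ x ↔ p ≤ cdf μ x := by
  refine ⟨fun hx => ?_, fun hx => csInf_le (bddBelow_setOf_le_cdf hp.1) hx⟩
  have le_cdf_of_lt : ∀ y, x < y → p ≤ cdf μ y := fun y hxy => by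
    obtain ⟨z, hz, hzy⟩ := exists_lt_of_csInf_lt (nonempty_setOf_le_cdf hp.2) (hx.trans_lt hxy)
    exact le_trans hz (monotone_cdf μ hzy.le)
  have right_cont : Tendsto (cdf μ) (nhdsWithin x (Ioi x)) (nhds (cdf μ x)) :=
    ((cdf μ).right_continuous x).mono Ioi_subset_Ici_self
  exact ge_of_tendsto right_cont (eventually_mem_nhdsWithin.mono le_cdf_of_lt)

end Quantile

variable {Ω : Type*} [MeasurableSpace Ω] {P : Measure Ω} {X : Ω → ℝ} {A : Set Ω}

section ValueAtRisk

variable [IsProbabilityMeasure P]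

lemma measureReal_setOf_le_eq_cdf_map (hX : AEMeasurable X P) (x : ℝ) :
    P.real {ω | X ω ≤ x} = cdf (P.map X) x := by
  have := Measure.isProbabilityMeasure_map hX
  rw [cdf_eq_real, map_measureReal_apply_of_aemeasurable hX measurableSet_Iic]
  rfl

lemma VaR_le_iff (hX : AEMeasurable X P) {β : ℝ} (hβ : β ∈ Ioo 0 1) {x : ℝ} :
    VaR P β X ≤ x ↔ 1 - β ≤ P.real {ω | X ω ≤ x} := by
  simp only [VaR, ← measureReal_def, measureReal_setOf_le_eq_cdf_map hX]
  exact csInf_setOf_le_cdf_le_iff (Ioo.one_sub_mem hβ)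

lemma antitoneOn_VaR (hX : AEMeasurable X P) : AntitoneOn (fun β => VaR P β X) (Ioo 0 1) :=
  fun _ hβ _ hγ hβγ =>
    (VaR_le_iff hX hγ).2 ((sub_le_sub_left hβγ 1).trans ((VaR_le_iff hX hβ).1 le_rfl))

lemma aemeasurable_VaR (hX : AEMeasurable X P) {p : ℝ} (hp : p ≤ 1) :
    AEMeasurable (fun β => VaR P β X) (volume.restrict (Ioo 0 p)) :=
  aemeasurable_restrict_of_antitoneOn measurableSet_Ioo
    ((antitoneOn_VaR hX).mono (Ioo_subset_Ioo_right hp))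

lemma volume_setOf_VaR_le_inter_Ioo (hX : AEMeasurable X P) {p : ℝ} (hp : p ≤ 1) (x : ℝ) :
    volume ({β | VaR P β X ≤ x} ∩ Ioo 0 p) =
      ENNReal.ofReal (P.real {ω | X ω ≤ x} - (1 - p)) := by
  set q := 1 - P.real {ω | X ω ≤ x} with hq
  have hq_nonneg : 0 ≤ q := sub_nonneg.2 measureReal_le_one
  have VaR_le_iff_le : ∀ β ∈ Ioo 0 p, VaR P β X ≤ x ↔ q ≤ β := fun β hβ => by
    rw [VaR_le_iff hX ⟨hβ.1, hβ.2.trans_le hp⟩, hq, sub_le_comm]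
  have Ioo_subset : Ioo q p ⊆ {β | VaR P β X ≤ x} ∩ Ioo 0 p := fun β hβ =>
    have hβp : β ∈ Ioo 0 p := ⟨hq_nonneg.trans_lt hβ.1, hβ.2⟩
    ⟨(VaR_le_iff_le β hβp).2 hβ.1.le, hβp⟩
  have subset_Ico : {β | VaR P β X ≤ x} ∩ Ioo 0 p ⊆ Ico q p := fun β hβ =>
    ⟨(VaR_le_iff_le β hβ.2).1 hβ.1, hβ.2.2⟩
  have length_eq : P.real {ω | X ω ≤ x} - (1 - p) = p - q := by rw [hq]; ring
  rw [length_eq]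
  exact le_antisymm (Real.volume_Ico ▸ measure_mono subset_Ico)
    (Real.volume_Ioo ▸ measure_mono Ioo_subset)

end ValueAtRisk

namespace TailEvent

lemma setOf_le_ae_le_compl_or_compl_ae_le (hA : TailEvent P X A) (x : ℝ) :
    {ω | X ω ≤ x} ≤ᵐ[P] (Aᶜ : Set Ω) ∨ (Aᶜ : Set Ω) ≤ᵐ[P] {ω | X ω ≤ x} := by
  obtain ⟨-, -, -, N, hN, hle⟩ := hA
  have ae_notMem : ∀ᵐ ω ∂P, ω ∉ N := measure_eq_zero_iff_ae_notMem.1 hN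
  by_cases hx : ∃ ω ∈ A \ N, X ω ≤ x
  · obtain ⟨ω, hω, hωx⟩ := hx
    right
    filter_upwards [ae_notMem] with ω' hω'N hω'A
    exact (hle ω hω ω' ⟨hω'A, hω'N⟩).trans hωx
  · left
    filter_upwards [ae_notMem] with ω hωN hωx hωA
    exact hx ⟨ω, ⟨hωA, hωN⟩, hωx⟩

lemma measure_setOf_le_inter [IsFiniteMeasure P] (hA : TailEvent P X A) (x : ℝ) :
    P ({ω | X ω ≤ x} ∩ A) = P {ω | X ω ≤ x} - P Aᶜ := by
  rcases hA.setOf_le_ae_le_compl_or_compl_ae_le x with hle | hle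
  · rw [tsub_eq_zero_of_le (measure_mono_ae hle), measure_eq_zero_iff_ae_notMem]
    filter_upwards [hle] with ω hω hωA
    exact hω hωA.1 hωA.2
  · have sdiff_eq : P ({ω | X ω ≤ x} \ A) = P Aᶜ := by
      refine measure_congr (EventuallyLE.antisymm (ae_of_all P fun ω hω => hω.2) ?_)
      filter_upwards [hle] with ω hω hωA
      exact ⟨hω hωA, hωA⟩
    refine ENNReal.eq_sub_of_add_eq (measure_ne_top P _) ?_
    rw [← sdiff_eq, measure_inter_add_sdiff _ hA.1]

lemma measureReal_mem_Ioo (hA : TailEvent P X A) : P.real A ∈ Ioo 0 1 := by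
  obtain ⟨-, hpos, hlt, -⟩ := hA
  exact ⟨ENNReal.toReal_pos hpos.ne' hlt.ne_top,
    ENNReal.toReal_lt_of_lt_ofReal (by rwa [ENNReal.ofReal_one])⟩

variable [IsProbabilityMeasure P]

lemma map_VaR_eq_map (hA : TailEvent P X A) (hX : AEMeasurable X P) :
    (volume.restrict (Ioo 0 (P.real A))).map (fun β => VaR P β X) = (P.restrict A).map X := by
  refine Measure.ext_of_Iic _ _ fun x => ?_
  rw [Measure.map_apply_of_aemeasurable (aemeasurable_VaR hX measureReal_le_one) measurableSet_Iic,
    Measure.map_apply_of_aemeasurable hX.restrict measurableSet_Iic,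
    Measure.restrict_apply' measurableSet_Ioo, Measure.restrict_apply' hA.1]
  calc volume ({β | VaR P β X ≤ x} ∩ Ioo 0 (P.real A))
      = ENNReal.ofReal (P.real {ω | X ω ≤ x} - P.real Aᶜ) := by
        rw [volume_setOf_VaR_le_inter_Ioo hX measureReal_le_one, probReal_compl_eq_one_sub hA.1]
    _ = P {ω | X ω ≤ x} - P Aᶜ := by
        rw [ENNReal.ofReal_sub _ measureReal_nonneg, ofReal_measureReal, ofReal_measureReal]
    _ = P ({ω | X ω ≤ x} ∩ A) := (hA.measure_setOf_le_inter x).symm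

lemma ES_eq_setAverage (hA : TailEvent P X A) (hX : AEMeasurable X P) :
    ES P (P.real A) X = ⨍ ω in A, X ω ∂P := by
  have integral_VaR : ∫ β in Ioo 0 (P.real A), VaR P β X = ∫ ω in A, X ω ∂P :=
    calc ∫ β in Ioo 0 (P.real A), VaR P β X
        = ∫ y, y ∂(volume.restrict (Ioo 0 (P.real A))).map (fun β => VaR P β X) :=
          (integral_map (aemeasurable_VaR hX measureReal_le_one) aestronglyMeasurable_id).symm
      _ = ∫ y, y ∂(P.restrict A).map X := by rw [hA.map_VaR_eq_map hX]
      _ = ∫ ω in A, X ω ∂P := integral_map hX.restrict aestronglyMeasurable_id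
  rw [ES, integral_VaR, setAverage_eq, one_div, smul_eq_mul]

end TailEvent

lemma TailEvent.sum {ι : Type*} [Fintype ι] [Nonempty ι] {X : ι → Ω → ℝ}
    (hA : ∀ i, TailEvent P (X i) A) : TailEvent P (fun ω => ∑ i, X i ω) A := by
  obtain ⟨hmeas, hpos, hlt, -⟩ := hA (Classical.arbitrary ι)
  choose N hN hle using fun i => (hA i).2.2.2
  refine ⟨hmeas, hpos, hlt, ⋃ i, N i, measure_iUnion_null hN, fun ω hω ω' hω' => ?_⟩
  refine Finset.sum_le_sum fun i _ => hle i ω ⟨hω.1, ?_⟩ ω' ⟨hω'.1, ?_⟩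
  · exact fun hi => hω.2 (mem_iUnion_of_mem i hi)
  · exact fun hi => hω'.2 (mem_iUnion_of_mem i hi)

section Portfolio

variable {n : ℕ} {X : Fin n → Ω → ℝ} {p : ℝ}

lemma Concentrated.exists_tailEvent [NeZero n] (hconc : Concentrated P X p) :
    ∃ A, P.real A = p ∧ ∀ i, TailEvent P (X i) A := by
  obtain ⟨A, hPA, hA⟩ := hconc
  have hp : 0 < p := ENNReal.ofReal_pos.1 (hPA ▸ (hA 0).2.1)
  exact ⟨A, by rw [measureReal_def, hPA, ENNReal.toReal_ofReal hp.le], hA⟩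

lemma Concentrated.mem_Ioo [NeZero n] (hconc : Concentrated P X p) : p ∈ Ioo 0 1 := by
  obtain ⟨A, rfl, hA⟩ := hconc.exists_tailEvent
  exact (hA 0).measureReal_mem_Ioo

lemma Concentrated.ES_sum [IsProbabilityMeasure P] [NeZero n] (hconc : Concentrated P X p)
    (hint : ∀ i, Integrable (X i) P) :
    ES P p (fun ω => ∑ i, X i ω) = ∑ i, ES P p (X i) := by
  obtain ⟨A, rfl, hA⟩ := hconc.exists_tailEvent
  calc ES P (P.real A) (fun ω => ∑ i, X i ω)
      = ⨍ ω in A, ∑ i, X i ω ∂P := (TailEvent.sum hA).ES_eq_setAverage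
          (integrable_finsetSum _ fun i _ => hint i).aemeasurable
    _ = ∑ i, ⨍ ω in A, X i ω ∂P := by
        simp only [setAverage_eq, integral_finsetSum _ fun i _ => (hint i).integrableOn,
          Finset.smul_sum]
    _ = ∑ i, ES P (P.real A) (X i) :=
        Finset.sum_congr rfl fun i _ => ((hA i).ES_eq_setAverage (hint i).aemeasurable).symm

lemma alphaStarES_eq_self_iff (hp : p ∈ Ioo 0 1)
    (hsum : ES P p (fun ω => ∑ i, X i ω) = ∑ i, ES P p (X i)) :
    alphaStarES P p X = p ↔ ∀ β ∈ Ioo 0 p,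
      ES P p (fun ω => ∑ i, X i ω) < ES P β (fun ω => ∑ i, X i ω) := by
  rw [alphaStarES, ← hsum]
  set levels := {β ∈ Ioo (0 : ℝ) 1 |
    ES P β (fun ω => ∑ i, X i ω) ≤ ES P p (fun ω => ∑ i, X i ω)} ∪ {1}
  have bddBelow_levels : BddBelow levels :=
    ⟨0, by rintro β (hβ | rfl); exacts [hβ.1.1.le, zero_le_one]⟩
  constructor
  · refine fun hstar β hβ => lt_of_not_ge fun hle => hβ.2.not_ge ?_
    exact hstar.symm.trans_le (csInf_le bddBelow_levels (.inl ⟨⟨hβ.1, hβ.2.trans hp.2⟩, hle⟩))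
  · refine fun hlt => IsLeast.csInf_eq ⟨.inl ⟨hp, le_rfl⟩, ?_⟩
    rintro β (⟨hβ, hle⟩ | rfl)
    · exact le_of_not_gt fun hβp => (hlt β ⟨hβ.1, hβp⟩).not_ge hle
    · exact hp.2.le

end Portfolio

end DQ

open DQ in
theorem stmt9_general {Ω : Type*} [MeasurableSpace Ω] {P : Measure Ω} [IsProbabilityMeasure P]
    {n : ℕ} [NeZero n] {X : Fin n → Ω → ℝ} (hint : ∀ i, Integrable (X i) P) {p : ℝ}
    (hconc : Concentrated P X p) :
    DQES P p X = 1 ↔ ∀ β ∈ Set.Ioo (0 : ℝ) p,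
      ES P p (fun ω => ∑ i, X i ω) < ES P β (fun ω => ∑ i, X i ω) := by
  rw [DQES, div_eq_one_iff_eq hconc.mem_Ioo.1.ne']
  exact alphaStarES_eq_self_iff hconc.mem_Ioo (hconc.ES_sum hint)

open DQ in
/-- If n ≥ 2, α ∈ (0, 1/n), X is an integrable α-CE model and ES_β(S) > ES_{nα}(S)
for all β ∈ (0, nα), where S = X₁ + ⋯ + Xₙ, then DQ^ES_{nα}(X) = 1. -/
theorem stmt9 {Ω : Type*} [MeasurableSpace Ω] (P : Measure Ω) [IsProbabilityMeasure P]
    (hP : Atomless P) (n : ℕ) (hn : 2 ≤ n) (X : Fin n → Ω → ℝ)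
    (hX : ∀ i, Measurable (X i)) (hint : ∀ i, Integrable (X i) P)
    (α : ℝ) (hα : α ∈ Set.Ioo (0 : ℝ) (1 / n)) (hCE : CEModel P X α)
    (hnf : ∀ β ∈ Set.Ioo (0 : ℝ) ((n : ℝ) * α),
      ES P ((n : ℝ) * α) (fun ω => ∑ i, X i ω) < ES P β (fun ω => ∑ i, X i ω)) :
    DQES P ((n : ℝ) * α) X = 1 := by
  have : NeZero n := ⟨by lia⟩
  exact (stmt9_general hint hCE.2.2.2).2 hnf
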